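/- Let C₀ > 0 and let M be a positive integer. There exists a constant C > 0 such that for all real a, x, T > 0 with T ≤ x/3, every (a,x,T,C₀,M)-admissible test function φ, and every r with max(a/(8x), 1) ≤ r ≤ a/x, one has |φ̌(r)| ≤ C·r^{−1}. -/

import Mathlib

open Real

/-- The modified Bessel function of imaginary order:
`K_{iν}(x) = ∫_0^∞ exp(−x cosh t) cos(νt) dt`. -/
noncomputable def KBessel (ν x : ℝ) : ℝ :=
  ∫ t in Set.Ioi (0:ℝ), Real.exp (-x * Real.cosh t) * Real.cos (ν * t)

/-- `f` is piecewise monotone on at most `M` subintervals of `[0,∞)`: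
there are points `0 = a 0 ≤ a 1 ≤ … ≤ a (M−1)` such that `f` is monotone or antitone
on each `[a i, a (i+1)]` for `i + 1 < M`, and on the final ray `[a (M−1), ∞)`. -/
def PiecewiseMono (f : ℝ → ℝ) (M : ℕ) : Prop :=
  ∃ a : ℕ → ℝ, a 0 = 0 ∧ Monotone a ∧
    (∀ i : ℕ, i + 1 < M →
      MonotoneOn f (Set.Icc (a i) (a (i + 1))) ∨
        AntitoneOn f (Set.Icc (a i) (a (i + 1)))) ∧
    (MonotoneOn f (Set.Ici (a (M - 1))) ∨ AntitoneOn f (Set.Ici (a (M - 1))))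

/-- An `(a,x,T,C₀,M)`-admissible test function. -/
def IsAdmissible (a x T C₀ : ℝ) (M : ℕ) (φ : ℝ → ℝ) : Prop :=
  ContDiff ℝ (⊤ : ℕ∞) φ ∧
  (∀ t : ℝ, 0 ≤ φ t ∧ φ t ≤ 1) ∧
  (∀ t : ℝ, a / (2 * x) ≤ t → t ≤ a / x → φ t = 1) ∧
  (∀ t : ℝ, t ≤ a / (2 * x + 2 * T) → φ t = 0) ∧
  (∀ t : ℝ, a / (x - T) ≤ t → φ t = 0) ∧
  (∀ t : ℝ, 0 ≤ t → |deriv φ t| ≤ C₀ * x ^ 2 / (a * T)) ∧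
  PiecewiseMono φ M ∧ PiecewiseMono (deriv φ) M

/-- The `K`-Bessel transform `φ̌(r) = cosh(πr) ∫_0^∞ K_{2ir}(u) φ(u) du/u`. -/
noncomputable def phiCheck (φ : ℝ → ℝ) (r : ℝ) : ℝ :=
  Real.cosh (Real.pi * r) * ∫ u in Set.Ioi (0:ℝ), KBessel (2 * r) u * φ u / u

/-!
For `P_ν(v) = ∫_0^∞ sin (νt) tanh t e^{-v cosh t} dt`, an integration by parts gives
`P_ν'(v) = -ν K_{iν}(v) / v`, so that `2r φ̌(r) = cosh (πr) ∫ φ'(v) P_{2r}(v) dv`. As `φ` is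
piecewise monotone with values in `[0, 1]`, `∫ |φ'|` is bounded, and it suffices to show
`P_ν(v) = O(e^{-πν/2})` uniformly for `v ≍ ν`. Shifting the contour to `Im z = π/2 - δ` with
`δ ≍ 1/ν` produces the factor `e^{-πν/2}` and leaves an oscillatory integral with the concave phase
`νt - b sinh t`, `b ≍ ν`, against an amplitude of size `1/t`. It is `O(1)`, however close `b` is to
`ν`: the phase itself is small for `t ≤ min (ν^{-1/3}, |ν - b|⁻¹)`, and beyond that the first and
second derivative tests of van der Corput apply.
-/

section Oscillatory

open Set MeasureTheory

variable {a b : ℝ}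

theorem integral_abs_deriv_eq_sub_of_monotoneOn {f : ℝ → ℝ} (hf : ContDiff ℝ 1 f) (hab : a ≤ b)
    (hmono : MonotoneOn f (Icc a b)) : ∫ t in a..b, |deriv f t| = f b - f a := by
  rw [← intervalIntegral.integral_deriv_eq_sub
    (fun t _ => hf.differentiable one_ne_zero t)
    ((hf.continuous_deriv le_rfl).intervalIntegrable a b)]
  refine intervalIntegral.integral_congr_Ioo_of_le hab fun t ht => abs_of_nonneg ?_
  rw [← derivWithin_of_mem_nhds (Icc_mem_nhds ht.1 ht.2)]
  exact hmono.derivWithin_nonneg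

theorem integral_abs_deriv_eq_sub_of_antitoneOn {f : ℝ → ℝ} (hf : ContDiff ℝ 1 f) (hab : a ≤ b)
    (hanti : AntitoneOn f (Icc a b)) : ∫ t in a..b, |deriv f t| = f a - f b := by
  have h := integral_abs_deriv_eq_sub_of_monotoneOn (f := fun t => -f t) hf.neg hab hanti.neg
  simp only [deriv.fun_neg, abs_neg] at h
  linarith

theorem abs_integral_mul_le_of_antitoneOn {f g : ℝ → ℝ} {K : ℝ} (hf : Continuous f)
    (hg : ContDiff ℝ 1 g) (hab : a ≤ b) (hanti : AntitoneOn g (Icc a b)) (hgb : 0 ≤ g b)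
    (hK : ∀ c ∈ Icc a b, |∫ t in a..c, f t| ≤ K) :
    |∫ t in a..b, g t * f t| ≤ g a * K := by
  have hg' : Continuous (deriv g) := hg.continuous_deriv le_rfl
  have hparts := intervalIntegral.integral_mul_deriv_eq_deriv_mul
    (fun t _ => (hg.differentiable one_ne_zero t).hasDerivAt)
    (fun t _ => (hf.integral_hasStrictDerivAt a t).hasDerivAt)
    (hg'.intervalIntegrable a b) (hf.intervalIntegrable a b)
  have hboundary : |g b * ∫ t in a..b, f t| ≤ g b * K := by
    rw [abs_mul, abs_of_nonneg hgb]
    exact mul_le_mul_of_nonneg_left (hK b (right_mem_Icc.2 hab)) hgb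
  have hremainder : |∫ t in a..b, deriv g t * ∫ u in a..t, f u| ≤ (g a - g b) * K := by
    rw [← integral_abs_deriv_eq_sub_of_antitoneOn hg hab hanti,
      ← intervalIntegral.integral_mul_const, ← norm_eq_abs]
    refine intervalIntegral.norm_integral_le_of_norm_le hab (.of_forall fun t ht => ?_)
      ((hg'.abs.mul continuous_const).intervalIntegrable a b)
    rw [norm_eq_abs, abs_mul]
    exact mul_le_mul_of_nonneg_left (hK t (Ioc_subset_Icc_self ht)) (abs_nonneg _)
  rw [hparts, intervalIntegral.integral_same, mul_zero, sub_zero]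
  calc _ ≤ g b * K + (g a - g b) * K := (abs_sub _ _).trans (add_le_add hboundary hremainder)
    _ = g a * K := by ring

theorem antitoneOn_deriv_of_deriv_deriv_nonpos {ψ : ℝ → ℝ} (hψ : ContDiff ℝ 2 ψ)
    (hconc : ∀ t ∈ Icc a b, deriv (deriv ψ) t ≤ 0) : AntitoneOn (deriv ψ) (Icc a b) := by
  have hψ' : ContDiff ℝ 1 (deriv ψ) := hψ.deriv'
  exact antitoneOn_of_deriv_nonpos (convex_Icc a b) hψ'.continuous.continuousOn
    (hψ'.differentiable one_ne_zero).differentiableOn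
    fun t ht => hconc t (interior_subset ht)

theorem abs_inv_add_abs_inv_add_inv_sub_inv_le {p q l : ℝ} (hl : 0 < l) (hpq : p ≤ q)
    (hp : l ≤ |p|) (hq : l ≤ |q|) : |p⁻¹| + |q⁻¹| + (p⁻¹ - q⁻¹) ≤ 2 / l := by
  have hp' : |p⁻¹| ≤ 1 / l := by rw [abs_inv, one_div]; exact inv_anti₀ hl hp
  have hq' : |q⁻¹| ≤ 1 / l := by rw [abs_inv, one_div]; exact inv_anti₀ hl hq
  have hl' : 2 / l = 1 / l + 1 / l := by ring
  rcases le_or_gt 0 q with h0q | h0q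
  · rw [abs_of_nonneg (inv_nonneg.2 h0q)]
    linarith [le_abs_self p⁻¹]
  · rw [abs_of_neg (inv_neg''.2 (hpq.trans_lt h0q))]
    linarith [neg_abs_le q⁻¹]

theorem abs_integral_mul_le_sub_of_hasDerivAt {F f g : ℝ → ℝ} (hab : a ≤ b)
    (hF : ∀ t ∈ uIcc a b, HasDerivAt F (f t) t) (hf : IntervalIntegrable f volume a b)
    (hf0 : ∀ t ∈ Icc a b, 0 ≤ f t) (hg : ∀ t ∈ Icc a b, |g t| ≤ 1) :
    |∫ t in a..b, f t * g t| ≤ F b - F a := by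
  rw [← intervalIntegral.integral_eq_sub_of_hasDerivAt hF hf, ← norm_eq_abs]
  refine intervalIntegral.norm_integral_le_of_norm_le hab (.of_forall fun t ht => ?_) hf
  have ht' := Ioc_subset_Icc_self ht
  rw [norm_eq_abs, abs_mul, abs_of_nonneg (hf0 t ht')]
  exact mul_le_of_le_one_right (hf0 t ht') (hg t ht')

theorem abs_integral_sin_le_of_le_abs_deriv {ψ : ℝ → ℝ} {l : ℝ} (hψ : ContDiff ℝ 2 ψ)
    (hab : a ≤ b) (hl : 0 < l) (hconc : ∀ t ∈ Icc a b, deriv (deriv ψ) t ≤ 0)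
    (hderiv : ∀ t ∈ Icc a b, l ≤ |deriv ψ t|) : |∫ t in a..b, sin (ψ t)| ≤ 2 / l := by
  have hψ' : ContDiff ℝ 1 (deriv ψ) := hψ.deriv'
  have hne : ∀ t ∈ uIcc a b, deriv ψ t ≠ 0 := fun t ht =>
    abs_pos.1 (hl.trans_le (hderiv t (by rwa [uIcc_of_le hab] at ht)))
  have hinv : ∀ t ∈ uIcc a b,
      HasDerivAt (fun t => (deriv ψ t)⁻¹) (-deriv (deriv ψ) t / deriv ψ t ^ 2) t := fun t ht =>
    (hψ'.differentiable one_ne_zero t).hasDerivAt.inv (hne t ht)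
  have hcos : ∀ t ∈ uIcc a b, HasDerivAt (fun t => -cos (ψ t)) (sin (ψ t) * deriv ψ t) t :=
    fun t _ => by
      simpa only [neg_mul, neg_neg] using
        (hψ.differentiable two_ne_zero t).hasDerivAt.cos.fun_neg
  have hinv_int : IntervalIntegrable (fun t => -deriv (deriv ψ) t / deriv ψ t ^ 2)
      volume a b :=
    ContinuousOn.intervalIntegrable <|
      (hψ'.continuous_deriv le_rfl).neg.continuousOn.div (hψ'.continuous.pow 2).continuousOn
        fun t ht => pow_ne_zero 2 (hne t ht)
  have hparts := intervalIntegral.integral_mul_deriv_eq_deriv_mul hinv hcos hinv_int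
    ((continuous_sin.comp hψ.continuous).mul hψ'.continuous |>.intervalIntegrable a b)
  have hremainder : |∫ t in a..b, -deriv (deriv ψ) t / deriv ψ t ^ 2 * -cos (ψ t)| ≤
      (deriv ψ b)⁻¹ - (deriv ψ a)⁻¹ := by
    refine abs_integral_mul_le_sub_of_hasDerivAt hab hinv hinv_int
      (fun t ht => div_nonneg (neg_nonneg.2 (hconc t ht)) (sq_nonneg _)) fun t _ => ?_
    rw [abs_neg]
    exact abs_cos_le_one _
  have hboundary : ∀ t, |(deriv ψ t)⁻¹ * -cos (ψ t)| ≤ |(deriv ψ t)⁻¹| := fun t => by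
    rw [abs_mul, abs_neg]
    exact mul_le_of_le_one_right (abs_nonneg _) (abs_cos_le_one _)
  calc |∫ t in a..b, sin (ψ t)|
      = |∫ t in a..b, (deriv ψ t)⁻¹ * (sin (ψ t) * deriv ψ t)| := by
        congr 1
        refine intervalIntegral.integral_congr fun t ht => ?_
        have := hne t ht
        field_simp
    _ ≤ |(deriv ψ b)⁻¹| + |(deriv ψ a)⁻¹| + ((deriv ψ b)⁻¹ - (deriv ψ a)⁻¹) := by
        rw [hparts]
        exact (abs_sub _ _).trans (add_le_add ((abs_sub _ _).trans
          (add_le_add (hboundary b) (hboundary a))) hremainder)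
    _ ≤ 2 / l := abs_inv_add_abs_inv_add_inv_sub_inv_le hl
        (antitoneOn_deriv_of_deriv_deriv_nonpos hψ hconc (left_mem_Icc.2 hab)
          (right_mem_Icc.2 hab) hab)
        (hderiv b (right_mem_Icc.2 hab)) (hderiv a (left_mem_Icc.2 hab))

theorem le_sub_mul_of_deriv_le_neg {f : ℝ → ℝ} {m : ℝ} (hf : Differentiable ℝ f)
    (hm : ∀ t ∈ Icc a b, deriv f t ≤ -m) {s t : ℝ} (hs : s ∈ Icc a b) (ht : t ∈ Icc a b)
    (hst : s ≤ t) : f t ≤ f s - m * (t - s) := by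
  have := (convex_Icc a b).image_sub_le_mul_sub_of_deriv_le hf.continuous.continuousOn
    hf.differentiableOn (fun u hu => hm u (interior_subset hu)) s hs t ht hst
  linarith

theorem abs_integral_sin_le_sub (ψ : ℝ → ℝ) (hab : a ≤ b) : |∫ t in a..b, sin (ψ t)| ≤ b - a := by
  have h := intervalIntegral.norm_integral_le_of_norm_le_const (a := a) (b := b)
    (fun t _ => (norm_eq_abs (sin (ψ t))).trans_le (abs_sin_le_one _))
  rwa [one_mul, abs_of_nonneg (sub_nonneg.2 hab), norm_eq_abs] at h

theorem abs_integral_sin_le_of_deriv_left_nonpos {ψ : ℝ → ℝ} {m : ℝ} (hψ : ContDiff ℝ 2 ψ)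
    (hab : a ≤ b) (hm : 0 < m) (hconc : ∀ t ∈ Icc a b, deriv (deriv ψ) t ≤ -m)
    (ha : deriv ψ a ≤ 0) : |∫ t in a..b, sin (ψ t)| ≤ 3 / √m := by
  have hψ' : ContDiff ℝ 1 (deriv ψ) := hψ.deriv'
  have hsqrt : 0 < √m := sqrt_pos.2 hm
  rcases le_total b (a + 1 / √m) with hshort | hlong
  · calc |∫ t in a..b, sin (ψ t)| ≤ b - a := abs_integral_sin_le_sub ψ hab
      _ ≤ 1 / √m := by linarith
      _ ≤ 3 / √m := by gcongr; norm_num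
  set c : ℝ := a + 1 / √m with hc
  have hac : a ≤ c := le_add_of_nonneg_right (by positivity)
  have hmc : m * (c - a) = √m := by rw [hc, add_sub_cancel_left, mul_one_div, div_sqrt]
  have hfar : |∫ t in c..b, sin (ψ t)| ≤ 2 / √m := by
    refine abs_integral_sin_le_of_le_abs_deriv hψ hlong hsqrt
      (fun t ht => by linarith [hconc t ⟨hac.trans ht.1, ht.2⟩]) fun t ht => le_abs.2 (.inr ?_)
    have hslope := le_sub_mul_of_deriv_le_neg (hψ'.differentiable one_ne_zero) hconc
      (left_mem_Icc.2 hab) ⟨hac.trans ht.1, ht.2⟩ (hac.trans ht.1)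
    have := mul_le_mul_of_nonneg_left (sub_le_sub_right ht.1 a) hm.le
    linarith
  have hint : ∀ s t, IntervalIntegrable (fun u => sin (ψ u)) volume s t :=
    (continuous_sin.comp hψ.continuous).intervalIntegrable
  rw [← intervalIntegral.integral_add_adjacent_intervals (hint a c) (hint c b)]
  calc _ ≤ (c - a) + 2 / √m :=
        (abs_add_le _ _).trans (add_le_add (abs_integral_sin_le_sub ψ hac) hfar)
    _ = 3 / √m := by rw [hc]; ring

theorem abs_integral_sin_le_of_deriv_right_nonneg {ψ : ℝ → ℝ} {m : ℝ} (hψ : ContDiff ℝ 2 ψ)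
    (hab : a ≤ b) (hm : 0 < m) (hconc : ∀ t ∈ Icc a b, deriv (deriv ψ) t ≤ -m)
    (hb : 0 ≤ deriv ψ b) : |∫ t in a..b, sin (ψ t)| ≤ 3 / √m := by
  have hderiv : deriv (fun t => ψ (-t)) = fun t => -deriv ψ (-t) :=
    funext fun t => deriv_comp_neg ψ t
  have hderiv₂ : ∀ t, deriv (deriv fun t => ψ (-t)) t = deriv (deriv ψ) (-t) := fun t => by
    rw [hderiv, deriv.fun_neg, deriv_comp_neg, neg_neg]
  have h := abs_integral_sin_le_of_deriv_left_nonpos (ψ := fun t => ψ (-t)) (hψ.comp contDiff_neg)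
    (neg_le_neg hab) hm
    (fun t ht => (hderiv₂ t).trans_le (hconc _ ⟨le_neg_of_le_neg ht.2, neg_le.1 ht.1⟩))
    (by simpa only [hderiv, neg_neg, neg_nonpos] using hb)
  rwa [intervalIntegral.integral_comp_neg fun t => sin (ψ t), neg_neg, neg_neg] at h

theorem abs_integral_sin_le_of_deriv_deriv_le_neg {ψ : ℝ → ℝ} {m : ℝ} (hψ : ContDiff ℝ 2 ψ)
    (hab : a ≤ b) (hm : 0 < m) (hconc : ∀ t ∈ Icc a b, deriv (deriv ψ) t ≤ -m) :
    |∫ t in a..b, sin (ψ t)| ≤ 6 / √m := by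
  have h36 : 3 / √m ≤ 6 / √m := by gcongr; norm_num
  rcases le_total (deriv ψ a) 0 with ha | ha
  · exact (abs_integral_sin_le_of_deriv_left_nonpos hψ hab hm hconc ha).trans h36
  rcases le_total 0 (deriv ψ b) with hb | hb
  · exact (abs_integral_sin_le_of_deriv_right_nonneg hψ hab hm hconc hb).trans h36
  obtain ⟨z, hz, hψz⟩ := intermediate_value_Icc' hab (hψ.continuous_deriv one_le_two).continuousOn
    ⟨hb, ha⟩
  have hleft := abs_integral_sin_le_of_deriv_right_nonneg hψ hz.1 hm
    (fun t ht => hconc t ⟨ht.1, ht.2.trans hz.2⟩) hψz.ge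
  have hright := abs_integral_sin_le_of_deriv_left_nonpos hψ hz.2 hm
    (fun t ht => hconc t ⟨hz.1.trans ht.1, ht.2⟩) hψz.le
  have hint : ∀ s t, IntervalIntegrable (fun u => sin (ψ u)) volume s t :=
    (continuous_sin.comp hψ.continuous).intervalIntegrable
  rw [← intervalIntegral.integral_add_adjacent_intervals (hint a z) (hint z b)]
  calc _ ≤ 3 / √m + 3 / √m := (abs_add_le _ _).trans (add_le_add hleft hright)
    _ = 6 / √m := by ring

end Oscillatory

section Hyperbolic

open Set Filter Topology

theorem self_le_cosh (t : ℝ) : t ≤ cosh t := by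
  rcases le_total 0 t with ht | ht
  · exact (self_le_sinh_iff.2 ht).trans (sinh_lt_cosh t).le
  · exact ht.trans (cosh_pos t).le

theorem sinh_le_mul_cosh {t : ℝ} (ht : 0 ≤ t) : sinh t ≤ t * cosh t := by
  have h := (convex_Icc 0 t).image_sub_le_mul_sub_of_deriv_le (C := cosh t)
    continuous_sinh.continuousOn differentiable_sinh.differentiableOn
    (fun u hu => by
      rw [interior_Icc] at hu
      rw [Real.deriv_sinh, cosh_le_cosh, abs_of_pos hu.1, abs_of_nonneg ht]
      exact hu.2.le)
    0 (left_mem_Icc.2 ht) t (right_mem_Icc.2 ht) ht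
  rwa [sinh_zero, sub_zero, sub_zero, mul_comm] at h

theorem cosh_sub_one_le_sq {t : ℝ} (ht : |t| ≤ 1) : cosh t - 1 ≤ t ^ 2 := by
  have ht2 : t ^ 2 ≤ 1 := (sq_le_one_iff_abs_le_one t).2 ht
  have hexp := (abs_le.1 (abs_exp_sub_one_sub_id_le (x := t ^ 2 / 2)
    (abs_le.2 ⟨by linarith [sq_nonneg t], by linarith⟩))).2
  nlinarith [cosh_le_exp_half_sq t, sq_nonneg t]

theorem exp_neg_mul_cosh_le_exp_neg_mul_cosh {p q : ℝ} (hpq : p ≤ q) (t : ℝ) :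
    exp (-q * cosh t) ≤ exp (-p * cosh t) :=
  exp_le_exp.2 (mul_le_mul_of_nonneg_right (neg_le_neg hpq) (cosh_pos t).le)

theorem exp_neg_mul_cosh_le_one {q : ℝ} (hq : 0 ≤ q) (t : ℝ) : exp (-q * cosh t) ≤ 1 :=
  (exp_neg_mul_cosh_le_exp_neg_mul_cosh hq t).trans_eq (by rw [neg_zero, zero_mul, exp_zero])

theorem exp_neg_mul_cosh_le_exp_neg_mul {q : ℝ} (hq : 0 ≤ q) (t : ℝ) :
    exp (-q * cosh t) ≤ exp (-q * t) :=
  exp_le_exp.2 (mul_le_mul_of_nonpos_left (self_le_cosh t) (neg_nonpos.2 hq))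

theorem tendsto_exp_neg_mul_atTop {q : ℝ} (hq : 0 < q) :
    Tendsto (fun t => exp (-q * t)) atTop (𝓝 0) :=
  tendsto_exp_atBot.comp (tendsto_id.const_mul_atTop_of_neg (neg_neg_of_pos hq))

theorem sinh_sq_add_sq_pos {s : ℝ} (hs : 0 < s) (t : ℝ) : 0 < sinh t ^ 2 + s ^ 2 := by positivity

end Hyperbolic

section TurningPoint

open Set MeasureTheory

/-- The amplitude `e^{-q cosh t} Re tanh (t + iθ)`, where `s = cos θ`. -/
noncomputable def sinWeight (q s t : ℝ) : ℝ :=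
  exp (-q * cosh t) * (sinh t * cosh t / (sinh t ^ 2 + s ^ 2))

/-- The amplitude `e^{-q cosh t} Im tanh (t + iθ)`, where `s = cos θ` and `c = sin θ`. -/
noncomputable def cosWeight (q s c t : ℝ) : ℝ :=
  exp (-q * cosh t) * (s * c / (sinh t ^ 2 + s ^ 2))

/-- The Bessel phase `νt - b sinh t`, concave on `t ≥ 0`, whose stationary point `cosh t = ν / b`
degenerates as `b → ν`. -/
noncomputable def besselPhase (ν b t : ℝ) : ℝ := ν * t - b * sinh t

variable {q s c ν b p τ R L t : ℝ}

theorem contDiff_sinWeight (hs : 0 < s) : ContDiff ℝ 1 (sinWeight q s) :=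
  (contDiff_const.mul contDiff_cosh).exp.mul
    ((contDiff_sinh.mul contDiff_cosh).div ((contDiff_sinh.pow 2).add contDiff_const)
      fun t => (sinh_sq_add_sq_pos hs t).ne')

theorem continuous_cosWeight (hs : 0 < s) : Continuous (cosWeight q s c) :=
  (continuous_const.mul continuous_cosh).rexp.mul
    (continuous_const.div ((continuous_sinh.pow 2).add continuous_const)
      fun t => (sinh_sq_add_sq_pos hs t).ne')

theorem sinWeight_nonneg (ht : 0 ≤ t) : 0 ≤ sinWeight q s t := by
  have := sinh_nonneg_iff.2 ht
  have := cosh_pos t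
  unfold sinWeight
  positivity

theorem sinWeight_le_two_div (hq : 0 ≤ q) (ht : 0 < t) (ht1 : t ≤ 1) :
    sinWeight q s t ≤ 2 / t := by
  have : 0 < sinh t := sinh_pos_iff.2 ht
  have hcosh : cosh t ≤ 2 := by nlinarith [cosh_sub_one_le_sq (abs_le.2 ⟨by linarith, ht1⟩)]
  calc sinWeight q s t ≤ 1 * (sinh t * cosh t / (sinh t ^ 2 + s ^ 2)) := by
        have := cosh_pos t
        exact mul_le_mul_of_nonneg_right (exp_neg_mul_cosh_le_one hq t) (by positivity)
    _ ≤ 1 * (sinh t * 2 / (sinh t ^ 2 + 0)) := by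
        gcongr
        exact sq_nonneg s
    _ = 2 / sinh t := by
        field_simp
        ring
    _ ≤ 2 / t := by
        gcongr
        exact self_le_sinh_iff.2 ht.le

theorem antitoneOn_sinh_mul_cosh_div (hs : 0 < s) (hs2 : s ≤ 1 / 2) :
    AntitoneOn (fun t => sinh t * cosh t / (sinh t ^ 2 + s ^ 2)) (Ici (2 * s)) := by
  have hderiv : ∀ t, HasDerivAt (fun t => sinh t * cosh t / (sinh t ^ 2 + s ^ 2))
      ((s ^ 2 - sinh t ^ 2 * (1 - 2 * s ^ 2)) / (sinh t ^ 2 + s ^ 2) ^ 2) t := fun t => by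
    refine (((hasDerivAt_sinh t).fun_mul (hasDerivAt_cosh t)).fun_div
      (((hasDerivAt_sinh t).fun_pow 2).add_const (s ^ 2))
      (sinh_sq_add_sq_pos hs t).ne').congr_deriv ?_
    congr 1
    linear_combination (s ^ 2 - sinh t ^ 2) * cosh_sq t
  refine antitoneOn_of_deriv_nonpos (convex_Ici _)
    (fun t _ => (hderiv t).continuousAt.continuousWithinAt)
    (fun t _ => (hderiv t).differentiableAt.differentiableWithinAt) fun t ht => ?_
  rw [interior_Ici] at ht
  have ht' : 2 * s ≤ sinh t :=
    ht.le.trans (self_le_sinh_iff.2 ((mul_nonneg zero_le_two hs.le).trans ht.le))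
  rw [(hderiv t).deriv]
  refine div_nonpos_of_nonpos_of_nonneg ?_ (sq_nonneg _)
  have hsq : (2 * s) ^ 2 ≤ sinh t ^ 2 := by gcongr
  have hs4 : s ^ 2 ≤ 1 / 4 := by nlinarith
  nlinarith

theorem antitoneOn_sinWeight (hq : 0 ≤ q) (hs : 0 < s) (hs2 : s ≤ 1 / 2) :
    AntitoneOn (sinWeight q s) (Ici (2 * s)) := fun t ht u hu htu => by
  have ht0 : 0 ≤ t := (mul_nonneg zero_le_two hs.le).trans ht
  have hu0 : 0 ≤ sinh u := sinh_nonneg_iff.2 (ht0.trans htu)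
  have := cosh_pos u
  refine mul_le_mul (exp_le_exp.2 ?_) (antitoneOn_sinh_mul_cosh_div hs hs2 ht hu htu)
    (by positivity) (exp_pos _).le
  have hcosh : cosh t ≤ cosh u := by
    rwa [cosh_le_cosh, abs_of_nonneg ht0, abs_of_nonneg (ht0.trans htu)]
  exact mul_le_mul_of_nonpos_left hcosh (neg_nonpos.2 hq)

theorem contDiff_besselPhase : ContDiff ℝ 2 (besselPhase ν b) :=
  (contDiff_const.mul contDiff_id).sub (contDiff_const.mul contDiff_sinh)

theorem deriv_besselPhase : deriv (besselPhase ν b) = fun t => ν - b * cosh t :=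
  funext fun t =>
    (((hasDerivAt_id' t).const_mul ν).fun_sub ((hasDerivAt_sinh t).const_mul b)).deriv.trans
      (by rw [mul_one])

theorem deriv_deriv_besselPhase : deriv (deriv (besselPhase ν b)) = fun t => -(b * sinh t) := by
  rw [deriv_besselPhase]
  exact funext fun t => (((hasDerivAt_cosh t).const_mul b).const_sub ν).deriv

theorem abs_besselPhase_le (hb : 0 ≤ b) (ht : 0 ≤ t) (ht1 : t ≤ 1) :
    |besselPhase ν b t| ≤ (|ν - b| + b * t ^ 2) * t := by
  have hsub : 0 ≤ sinh t - t := sub_nonneg.2 (self_le_sinh_iff.2 ht)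
  have hsinh : sinh t - t ≤ t ^ 2 * t := by
    nlinarith [sinh_le_mul_cosh ht, cosh_sub_one_le_sq (abs_le.2 ⟨by linarith, ht1⟩)]
  calc |besselPhase ν b t| = |(ν - b) * t - b * (sinh t - t)| := by unfold besselPhase; ring_nf
    _ ≤ |ν - b| * t + b * (sinh t - t) := by
        refine (abs_sub _ _).trans_eq ?_
        rw [abs_mul, abs_of_nonneg ht, abs_of_nonneg (mul_nonneg hb hsub)]
    _ ≤ |ν - b| * t + b * (t ^ 2 * t) := by gcongr
    _ = (|ν - b| + b * t ^ 2) * t := by ring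

theorem continuous_sinWeight_mul_sin_besselPhase (hs : 0 < s) :
    Continuous fun t => sinWeight q s t * sin (besselPhase ν b t) :=
  (contDiff_sinWeight hs).continuous.mul
    (continuous_sin.comp contDiff_besselPhase.continuous)

theorem continuous_cosWeight_mul_cos_besselPhase (hs : 0 < s) :
    Continuous fun t => cosWeight q s c t * cos (besselPhase ν b t) :=
  (continuous_cosWeight hs).mul (continuous_cos.comp contDiff_besselPhase.continuous)

theorem abs_integral_sinWeight_mul_sin_near_le (hq : 0 ≤ q) (hb : 0 ≤ b) (hp : 0 < p)
    (hp1 : p ≤ 1) :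
    |∫ t in 0..p, sinWeight q s t * sin (besselPhase ν b t)| ≤ 2 * (|ν - b| + b * p ^ 2) * p := by
  have hbound : ∀ t ∈ Ioc 0 p,
      ‖sinWeight q s t * sin (besselPhase ν b t)‖ ≤ 2 * (|ν - b| + b * p ^ 2) := fun t ht => by
    have ht1 : t ≤ 1 := ht.2.trans hp1
    rw [norm_eq_abs, abs_mul, abs_of_nonneg (sinWeight_nonneg ht.1.le)]
    calc sinWeight q s t * |sin (besselPhase ν b t)|
        ≤ 2 / t * ((|ν - b| + b * t ^ 2) * t) :=
          mul_le_mul (sinWeight_le_two_div hq ht.1 ht1)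
            (abs_sin_le_abs.trans (abs_besselPhase_le hb ht.1.le ht1)) (abs_nonneg _)
            (div_nonneg zero_le_two ht.1.le)
      _ = 2 * (|ν - b| + b * t ^ 2) := by
          have := ht.1.ne'
          field_simp
      _ ≤ 2 * (|ν - b| + b * p ^ 2) := by
          have := ht.1
          gcongr
          exact ht.2
  have h := intervalIntegral.norm_integral_le_of_norm_le_const (by rwa [uIoc_of_le hp.le])
  rwa [norm_eq_abs, sub_zero, abs_of_pos hp] at h

theorem abs_integral_sinWeight_mul_sin_le (hq : 0 ≤ q) (hs : 0 < s) (hs2 : s ≤ 1 / 2)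
    (hsp : 2 * s ≤ p) (hp1 : p ≤ 1) (hpR : p ≤ R) {K : ℝ}
    (hK : ∀ x ∈ Icc p R, |∫ t in p..x, sin (besselPhase ν b t)| ≤ K) :
    |∫ t in p..R, sinWeight q s t * sin (besselPhase ν b t)| ≤ 2 / p * K := by
  have hp : 0 < p := by linarith
  refine (abs_integral_mul_le_of_antitoneOn (continuous_sin.comp contDiff_besselPhase.continuous)
    (contDiff_sinWeight hs) hpR ?_ (sinWeight_nonneg (hp.le.trans hpR)) hK).trans ?_
  · exact (antitoneOn_sinWeight hq hs hs2).mono fun t ht => hsp.trans ht.1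
  · exact mul_le_mul_of_nonneg_right (sinWeight_le_two_div hq hp hp1)
      ((abs_nonneg _).trans (hK p (left_mem_Icc.2 hpR)))

theorem half_abs_sub_le_abs_deriv_besselPhase (hb : 0 ≤ b) (hbτ : b * τ ^ 2 ≤ |ν - b| / 2)
    (hτ1 : τ ≤ 1) (ht : 0 ≤ t) (htτ : t ≤ τ) : |ν - b| / 2 ≤ |deriv (besselPhase ν b) t| := by
  have hperturb : |b * (cosh t - 1)| ≤ |ν - b| / 2 := by
    rw [abs_of_nonneg (mul_nonneg hb (sub_nonneg.2 (one_le_cosh t)))]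
    refine le_trans (mul_le_mul_of_nonneg_left ?_ hb) hbτ
    exact (cosh_sub_one_le_sq (abs_le.2 ⟨by linarith, by linarith⟩)).trans (by gcongr)
  calc |ν - b| / 2 ≤ |ν - b| - |b * (cosh t - 1)| := by linarith
    _ ≤ |ν - b - b * (cosh t - 1)| := abs_sub_abs_le_abs_sub _ _
    _ = |deriv (besselPhase ν b) t| := by rw [deriv_besselPhase]; ring_nf

theorem abs_integral_sinWeight_mul_sin_middle_le (hq : 0 ≤ q) (hs : 0 < s) (hs2 : s ≤ 1 / 2)
    (hsp : 2 * s ≤ p) (hpτ : p ≤ τ) (hτ1 : τ ≤ 1) (hb : 0 ≤ b) (hνb : 0 < |ν - b|)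
    (hbτ : b * τ ^ 2 ≤ |ν - b| / 2) :
    |∫ t in p..τ, sinWeight q s t * sin (besselPhase ν b t)| ≤ 8 / (p * |ν - b|) := by
  have hp : 0 < p := by linarith
  have h := abs_integral_sinWeight_mul_sin_le hq hs hs2 hsp (hpτ.trans hτ1) hpτ fun x hx =>
    abs_integral_sin_le_of_le_abs_deriv (contDiff_besselPhase (ν := ν) (b := b)) hx.1
      (half_pos hνb)
      (fun t ht => by
        rw [deriv_deriv_besselPhase]
        exact neg_nonpos.2 (mul_nonneg hb (sinh_nonneg_iff.2 (hp.le.trans ht.1))))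
      fun t ht => half_abs_sub_le_abs_deriv_besselPhase hb hbτ hτ1 (hp.le.trans ht.1)
        (ht.2.trans hx.2)
  refine h.trans_eq ?_
  field_simp
  norm_num

theorem abs_integral_sinWeight_mul_sin_tail_le (hq : 0 ≤ q) (hs : 0 < s) (hs2 : s ≤ 1 / 2)
    (hsτ : 2 * s ≤ τ) (hτ1 : τ ≤ 1) (hτR : τ ≤ R) (hb : 0 < b) :
    |∫ t in τ..R, sinWeight q s t * sin (besselPhase ν b t)| ≤ 12 / √(b * τ ^ 3) := by
  have hτ : 0 < τ := by linarith
  have h := abs_integral_sinWeight_mul_sin_le hq hs hs2 hsτ hτ1 hτR fun x hx =>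
    abs_integral_sin_le_of_deriv_deriv_le_neg (contDiff_besselPhase (ν := ν)) hx.1
      (mul_pos hb hτ) fun t ht => by
        rw [deriv_deriv_besselPhase]
        exact neg_le_neg (mul_le_mul_of_nonneg_left
          (ht.1.trans (self_le_sinh_iff.2 (hτ.le.trans ht.1))) hb.le)
  refine h.trans_eq ?_
  rw [show b * τ ^ 3 = b * τ * τ ^ 2 by ring, sqrt_mul (mul_pos hb hτ).le, sqrt_sq hτ.le]
  field_simp
  norm_num

theorem abs_integral_sinWeight_mul_sin_head_le (hq : 0 ≤ q) (hs : 0 < s) (hs2 : s ≤ 1 / 2)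
    (hL : 1 ≤ L) (hb : 0 ≤ b) (hτ : 0 < τ) (hτ1 : τ ≤ 1)
    (hbτ : b * τ ^ 3 ≤ L) (hsν : 2 * s * |ν - b| ≤ 1) :
    |∫ t in 0..τ, sinWeight q s t * sin (besselPhase ν b t)| ≤ 12 * L := by
  rcases le_or_gt (|ν - b| * τ) (2 * L) with hclose | hapart
  · calc _ ≤ 2 * (|ν - b| + b * τ ^ 2) * τ := abs_integral_sinWeight_mul_sin_near_le hq hb hτ hτ1
      _ = 2 * (|ν - b| * τ + b * τ ^ 3) := by ring
      _ ≤ 12 * L := by linarith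
  have hνb : 0 < |ν - b| := pos_of_mul_pos_left (by linarith) hτ.le
  obtain ⟨p, hp, hpν⟩ : ∃ p, 0 < p ∧ p * |ν - b| = 1 :=
    ⟨|ν - b|⁻¹, inv_pos.2 hνb, inv_mul_cancel₀ hνb.ne'⟩
  have hpτ : p ≤ τ := le_of_mul_le_mul_right (by linarith) hνb
  have hint := (continuous_sinWeight_mul_sin_besselPhase (q := q) (ν := ν) (b := b)
    hs).intervalIntegrable (μ := volume)
  have hnear : |∫ t in 0..p, sinWeight q s t * sin (besselPhase ν b t)| ≤ 2 * (1 + L) := by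
    calc _ ≤ 2 * (|ν - b| + b * p ^ 2) * p :=
          abs_integral_sinWeight_mul_sin_near_le hq hb hp (hpτ.trans hτ1)
      _ = 2 * (p * |ν - b| + b * p ^ 3) := by ring
      _ ≤ 2 * (p * |ν - b| + b * τ ^ 3) := by gcongr
      _ ≤ 2 * (1 + L) := by linarith
  have hmiddle : |∫ t in p..τ, sinWeight q s t * sin (besselPhase ν b t)| ≤ 8 := by
    calc _ ≤ 8 / (p * |ν - b|) := abs_integral_sinWeight_mul_sin_middle_le hq hs hs2
          (le_of_mul_le_mul_right (by linarith) hνb) hpτ hτ1 hb hνb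
          (le_of_mul_le_mul_right (by linarith) hτ)
      _ = 8 := by rw [hpν, div_one]
  rw [← intervalIntegral.integral_add_adjacent_intervals (hint 0 p) (hint p τ)]
  calc _ ≤ 2 * (1 + L) + 8 := (abs_add_le _ _).trans (add_le_add hnear hmiddle)
    _ ≤ 12 * L := by linarith

theorem exists_mul_cube_eq_one (hν : 1 ≤ ν) : ∃ τ : ℝ, 0 < τ ∧ τ ≤ 1 ∧ ν * τ ^ 3 = 1 := by
  have hν0 : 0 < ν := by linarith
  refine ⟨ν ^ (-(1 / 3) : ℝ), rpow_pos_of_pos hν0 _,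
    rpow_le_one_of_one_le_of_nonpos hν (by norm_num), ?_⟩
  rw [← rpow_natCast, ← rpow_mul hν0.le]
  norm_num [rpow_neg_one, hν0.ne']

/-- The cut is made at `τ = ν^{-1/3}`, the width of the region in which the phase is stationary
when `b = ν`. -/
theorem abs_integral_sinWeight_mul_sin_besselPhase_le (hq : 0 ≤ q) (hs : 0 < s) (hL : 1 ≤ L)
    (hν : 1 ≤ ν) (hsν : 2 * L * ν * s ≤ 1) (hνb : ν ≤ 2 * L * b) (hbν : b ≤ L * ν) (hR : 1 ≤ R) :
    |∫ t in 0..R, sinWeight q s t * sin (besselPhase ν b t)| ≤ 36 * L := by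
  obtain ⟨τ, hτ, hτ1, hντ⟩ := exists_mul_cube_eq_one hν
  have hb : 0 < b := pos_of_mul_pos_right (by linarith) (by linarith : 0 ≤ 2 * L)
  have hLν : ν ≤ L * ν := le_mul_of_one_le_left (by linarith) hL
  have hs2 : s ≤ 1 / 2 := by nlinarith
  have hsτ : 2 * s ≤ τ := by
    have hsν' : 2 * s * ν ≤ ν * τ ^ 3 := by nlinarith
    have hτ3 : τ ^ 3 ≤ τ := pow_le_of_le_one hτ.le hτ1 three_ne_zero
    exact (le_of_mul_le_mul_right (hsν'.trans_eq (mul_comm _ _)) (by linarith)).trans hτ3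
  have hhead : |∫ t in 0..τ, sinWeight q s t * sin (besselPhase ν b t)| ≤ 12 * L := by
    refine abs_integral_sinWeight_mul_sin_head_le hq hs hs2 hL hb.le hτ hτ1 ?_ ?_
    · calc b * τ ^ 3 ≤ L * ν * τ ^ 3 := by gcongr
        _ = L := by rw [mul_assoc, hντ, mul_one]
    · have hdist : |ν - b| ≤ L * ν := abs_le.2 ⟨by linarith, by linarith⟩
      nlinarith
  have htail : |∫ t in τ..R, sinWeight q s t * sin (besselPhase ν b t)| ≤ 24 * L := by
    have hcube : 1 ≤ 2 * L * (b * τ ^ 3) := by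
      calc 1 = ν * τ ^ 3 := hντ.symm
        _ ≤ 2 * L * b * τ ^ 3 := by gcongr
        _ = 2 * L * (b * τ ^ 3) := by ring
    have hsqrt : 1 / (2 * L) ≤ √(b * τ ^ 3) := by
      refine le_sqrt_of_sq_le ?_
      rw [div_pow, one_pow, div_le_iff₀ (by positivity)]
      nlinarith
    calc _ ≤ 12 / √(b * τ ^ 3) :=
          abs_integral_sinWeight_mul_sin_tail_le hq hs hs2 hsτ hτ1 (hτ1.trans hR) hb
      _ ≤ 12 / (1 / (2 * L)) := by gcongr
      _ = 24 * L := by field_simp; norm_num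
  have hint := (continuous_sinWeight_mul_sin_besselPhase (q := q) (ν := ν) (b := b)
    hs).intervalIntegrable (μ := volume)
  rw [← intervalIntegral.integral_add_adjacent_intervals (hint 0 τ) (hint τ R)]
  calc _ ≤ 12 * L + 24 * L := (abs_add_le _ _).trans (add_le_add hhead htail)
    _ = 36 * L := by ring

theorem abs_integral_cosWeight_mul_cos_le (hq : 0 ≤ q) (hs : 0 < s) (hc : |c| ≤ 1) (hR : 0 ≤ R)
    (ψ : ℝ → ℝ) : |∫ t in 0..R, cosWeight q s c t * cos (ψ t)| ≤ 2 := by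
  have hbound : ∀ t ∈ Ioc 0 R, ‖cosWeight q s c t * cos (ψ t)‖ ≤ s * (s ^ 2 + t ^ 2)⁻¹ :=
    fun t ht => by
      rw [norm_eq_abs, abs_mul, cosWeight, abs_mul, abs_of_pos (exp_pos _), abs_div, abs_mul,
        abs_of_pos hs, abs_of_pos (sinh_sq_add_sq_pos hs t)]
      calc _ ≤ 1 * (s * 1 / (t ^ 2 + s ^ 2)) * 1 := by
            have := ht.1
            gcongr
            · exact exp_neg_mul_cosh_le_one hq t
            · exact self_le_sinh_iff.2 ht.1.le
            · exact abs_cos_le_one _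
        _ = s * (s ^ 2 + t ^ 2)⁻¹ := by ring
  have hcont : Continuous fun t : ℝ => s * (s ^ 2 + t ^ 2)⁻¹ :=
    continuous_const.mul ((continuous_const.add (continuous_pow 2)).inv₀ fun t =>
      (add_pos_of_pos_of_nonneg (pow_pos hs 2) (sq_nonneg t)).ne')
  rw [← norm_eq_abs]
  calc _ ≤ ∫ t in 0..R, s * (s ^ 2 + t ^ 2)⁻¹ :=
        intervalIntegral.norm_integral_le_of_norm_le hR (.of_forall hbound)
          (hcont.intervalIntegrable 0 R)
    _ = arctan (R / s) := by
        rw [intervalIntegral.integral_const_mul, integral_inv_sq_add_sq hs.ne', zero_div,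
          arctan_zero, sub_zero, mul_inv_cancel_left₀ hs.ne']
    _ ≤ 2 := by linarith [arctan_lt_pi_div_two (R / s), pi_lt_four]

end TurningPoint

section ContourShift

open Set Filter Topology

theorem re_ofReal_add_mul_I (x y : ℝ) : ((x : ℂ) + y * Complex.I).re = x := by
  rw [Complex.add_re, Complex.re_ofReal_mul, Complex.I_re, mul_zero, add_zero, Complex.ofReal_re]

theorem im_ofReal_add_mul_I (x y : ℝ) : ((x : ℂ) + y * Complex.I).im = y := by
  rw [Complex.add_im, Complex.im_ofReal_mul, Complex.I_im, mul_one, Complex.ofReal_im, zero_add]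

theorem integral_im_eq_of_re_eq_zero {f : ℂ → ℂ} {R θ : ℝ} (hR : 0 ≤ R) (hθ : 0 ≤ θ)
    (hf : DifferentiableOn ℂ f (Icc 0 R ×ℂ Icc 0 θ))
    (hre : ∀ y ∈ Icc 0 θ, (f (y * Complex.I)).re = 0) :
    ∫ t in 0..R, (f t).im =
      (∫ t in 0..R, (f (t + θ * Complex.I)).im) - (∫ y in 0..θ, f (R + y * Complex.I)).re := by
  have hhor : ∀ y ∈ Icc 0 θ, ∫ t in 0..R, (f (t + y * Complex.I)).im =
      (∫ t in 0..R, f (t + y * Complex.I)).im := fun y hy =>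
    Complex.imCLM.intervalIntegral_comp_comm <| ContinuousOn.intervalIntegrable_of_Icc hR <|
      hf.continuousOn.comp (by fun_prop) fun t ht => by simpa [Complex.mem_reProdIm] using ⟨ht, hy⟩
  have hvert : ∫ y in 0..θ, (f (y * Complex.I)).re = (∫ y in 0..θ, f (y * Complex.I)).re :=
    Complex.reCLM.intervalIntegral_comp_comm <| ContinuousOn.intervalIntegrable_of_Icc hθ <|
      hf.continuousOn.comp (by fun_prop) fun y hy => by
        simpa [Complex.mem_reProdIm] using And.intro hR hy
  have hzero : ∫ y in 0..θ, (f (y * Complex.I)).re = 0 := by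
    rw [intervalIntegral.integral_congr (g := fun _ => 0) fun y hy =>
      hre y (by rwa [uIcc_of_le hθ] at hy), intervalIntegral.integral_zero]
  have hbase := hhor 0 ⟨le_rfl, hθ⟩
  have hrect := congrArg Complex.im <|
    Complex.integral_boundary_rect_eq_zero_of_differentiableOn f 0 (R + θ * Complex.I)
      (by simpa [uIcc_of_le hR, uIcc_of_le hθ] using hf)
  simp only [Complex.zero_re, Complex.zero_im, Complex.ofReal_zero, zero_mul, add_zero,
    re_ofReal_add_mul_I, Complex.ofReal_im, Complex.im_ofReal_mul, Complex.I_im, mul_one,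
    smul_eq_mul, Complex.add_im, Complex.sub_im, Complex.I_mul_im, zero_add] at hrect hbase
  rw [hbase, hhor θ ⟨hθ, le_rfl⟩]
  linarith

/-- The holomorphic integrand whose imaginary part on the real axis is
`sin (νt) tanh t e^{-v cosh t}`. -/
noncomputable def besselIntegrand (ν v : ℝ) (z : ℂ) : ℂ :=
  Complex.exp (ν * Complex.I * z) * Complex.tanh z * Complex.exp (-v * Complex.cosh z)

variable {ν v x y s R L δ : ℝ}

theorem cosh_ofReal_add_mul_I (x y : ℝ) : Complex.cosh (x + y * Complex.I) =
    (cosh x * cos y : ℝ) + (sinh x * sin y : ℝ) * Complex.I := by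
  rw [Complex.cosh_add, Complex.cosh_mul_I, Complex.sinh_mul_I]
  push_cast
  ring

theorem sinh_ofReal_add_mul_I (x y : ℝ) : Complex.sinh (x + y * Complex.I) =
    (sinh x * cos y : ℝ) + (cosh x * sin y : ℝ) * Complex.I := by
  rw [Complex.sinh_add, Complex.cosh_mul_I, Complex.sinh_mul_I]
  push_cast
  ring

theorem cosh_mul_cos_le_norm_cosh (x y : ℝ) :
    cosh x * cos y ≤ ‖Complex.cosh (x + y * Complex.I)‖ := by
  refine le_of_eq_of_le ?_ (Complex.re_le_norm _)
  rw [cosh_ofReal_add_mul_I, re_ofReal_add_mul_I]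

theorem norm_sinh_le_cosh (x y : ℝ) : ‖Complex.sinh (x + y * Complex.I)‖ ≤ cosh x := by
  rw [sinh_ofReal_add_mul_I, Complex.norm_add_mul_I, sqrt_le_left (cosh_pos x).le]
  have hsinh : sinh x ^ 2 * cos y ^ 2 ≤ cosh x ^ 2 * cos y ^ 2 := by
    gcongr ?_ * _
    rw [cosh_sq]
    linarith
  calc (sinh x * cos y) ^ 2 + (cosh x * sin y) ^ 2
      = sinh x ^ 2 * cos y ^ 2 + cosh x ^ 2 * sin y ^ 2 := by ring
    _ ≤ cosh x ^ 2 * (cos y ^ 2 + sin y ^ 2) := by linarith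
    _ = cosh x ^ 2 := by rw [cos_sq_add_sin_sq, mul_one]

theorem cosh_ofReal_add_mul_I_ne_zero (hy : 0 < cos y) :
    Complex.cosh (x + y * Complex.I) ≠ 0 :=
  norm_pos_iff.1 ((mul_pos (cosh_pos x) hy).trans_le (cosh_mul_cos_le_norm_cosh x y))

theorem tanh_ofReal_add_mul_I (hy : 0 < cos y) : Complex.tanh (x + y * Complex.I) =
    (sinh x * cosh x / (sinh x ^ 2 + cos y ^ 2) : ℝ) +
      (cos y * sin y / (sinh x ^ 2 + cos y ^ 2) : ℝ) * Complex.I := by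
  have hden := (sinh_sq_add_sq_pos hy x).ne'
  rw [Complex.tanh_eq_sinh_div_cosh, div_eq_iff (cosh_ofReal_add_mul_I_ne_zero hy),
    cosh_ofReal_add_mul_I, sinh_ofReal_add_mul_I]
  apply Complex.ext
  · simp only [re_ofReal_add_mul_I, Complex.mul_re, im_ofReal_add_mul_I]
    field_simp
    linear_combination -sinh x * cosh_sq x + sinh x * sin_sq_add_cos_sq y
  · simp only [Complex.mul_im, re_ofReal_add_mul_I, im_ofReal_add_mul_I]
    field_simp

theorem besselIntegrand_ofReal_add_mul_I (hy : 0 < cos y) :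
    besselIntegrand ν v (x + y * Complex.I) =
      (exp (-(ν * y)) * exp (-(v * cos y) * cosh x) : ℝ) *
        ((sinh x * cosh x / (sinh x ^ 2 + cos y ^ 2) : ℝ) +
          (cos y * sin y / (sinh x ^ 2 + cos y ^ 2) : ℝ) * Complex.I) *
        Complex.exp (besselPhase ν (v * sin y) x * Complex.I) := by
  have hexp : Complex.exp (ν * Complex.I * (x + y * Complex.I)) *
      Complex.exp (-v * Complex.cosh (x + y * Complex.I)) =
      (exp (-(ν * y)) * exp (-(v * cos y) * cosh x) : ℝ) *
        Complex.exp (besselPhase ν (v * sin y) x * Complex.I) := by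
    rw [Complex.ofReal_mul, Complex.ofReal_exp, Complex.ofReal_exp, ← Complex.exp_add,
      ← Complex.exp_add, ← Complex.exp_add, cosh_ofReal_add_mul_I, besselPhase]
    congr 1
    push_cast
    linear_combination (ν * y : ℂ) * Complex.I_mul_I
  rw [besselIntegrand, tanh_ofReal_add_mul_I hy, mul_right_comm, hexp, mul_right_comm]

theorem im_besselIntegrand (hy : 0 < cos y) : (besselIntegrand ν v (x + y * Complex.I)).im =
    exp (-(ν * y)) *
      (sinWeight (v * cos y) (cos y) x * sin (besselPhase ν (v * sin y) x) +
        cosWeight (v * cos y) (cos y) (sin y) x * cos (besselPhase ν (v * sin y) x)) := by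
  rw [besselIntegrand_ofReal_add_mul_I hy, Complex.exp_mul_I, ← Complex.ofReal_cos,
    ← Complex.ofReal_sin]
  simp only [Complex.mul_im, Complex.mul_re, re_ofReal_add_mul_I,
    im_ofReal_add_mul_I, Complex.ofReal_re, Complex.ofReal_im, sinWeight, cosWeight]
  ring

theorem im_besselIntegrand_ofReal (ν v x : ℝ) :
    (besselIntegrand ν v x).im = sin (ν * x) * tanh x * exp (-v * cosh x) := by
  have h := im_besselIntegrand (ν := ν) (v := v) (x := x) (y := 0) (by rw [cos_zero]; exact one_pos)
  have := (cosh_pos x).ne'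
  simp only [Complex.ofReal_zero, zero_mul, add_zero, cos_zero, sin_zero, mul_zero, neg_zero,
    exp_zero, one_mul, mul_one, sinWeight, cosWeight, besselPhase, sub_zero, one_pow, ← cosh_sq,
    zero_div] at h
  rw [h, tanh_eq_sinh_div_cosh]
  field_simp

theorem re_besselIntegrand_mul_I (hy : 0 < cos y) :
    (besselIntegrand ν v (y * Complex.I)).re = 0 := by
  have h := besselIntegrand_ofReal_add_mul_I (ν := ν) (v := v) (x := 0) hy
  rw [Complex.ofReal_zero, zero_add] at h
  have hphase : besselPhase ν (v * sin y) 0 = 0 := by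
    rw [besselPhase, sinh_zero, mul_zero, mul_zero, sub_zero]
  rw [h, hphase, sinh_zero, zero_mul, zero_div, Complex.ofReal_zero, zero_mul, Complex.exp_zero,
    mul_one, zero_add, Complex.re_ofReal_mul, Complex.re_ofReal_mul, Complex.I_re, mul_zero,
    mul_zero]

theorem norm_besselIntegrand_le (hν : 0 ≤ ν) (hv : 0 ≤ v) (hy : 0 ≤ y) (hs : 0 < s)
    (hsy : s ≤ cos y) :
    ‖besselIntegrand ν v (x + y * Complex.I)‖ ≤ s⁻¹ * exp (-(v * s) * cosh x) := by
  have hcosh := cosh_pos x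
  have hfreq : ‖Complex.exp (ν * Complex.I * (x + y * Complex.I))‖ ≤ 1 := by
    rw [Complex.norm_exp, exp_le_one_iff]
    simpa using mul_nonneg hν hy
  have htanh : ‖Complex.tanh (x + y * Complex.I)‖ ≤ s⁻¹ := by
    rw [Complex.tanh_eq_sinh_div_cosh, norm_div]
    calc _ ≤ cosh x / (cosh x * s) := by
          gcongr
          · exact norm_sinh_le_cosh x y
          · exact (mul_le_mul_of_nonneg_left hsy hcosh.le).trans (cosh_mul_cos_le_norm_cosh x y)
      _ = s⁻¹ := by field_simp
  have hdecay : ‖Complex.exp (-v * Complex.cosh (x + y * Complex.I))‖ ≤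
      exp (-(v * s) * cosh x) := by
    rw [Complex.norm_exp, exp_le_exp, cosh_ofReal_add_mul_I, ← Complex.ofReal_neg,
      Complex.re_ofReal_mul, re_ofReal_add_mul_I]
    nlinarith [mul_le_mul_of_nonneg_left hsy (mul_nonneg hv hcosh.le)]
  rw [besselIntegrand, norm_mul, norm_mul]
  calc _ ≤ 1 * s⁻¹ * exp (-(v * s) * cosh x) := by gcongr
    _ = s⁻¹ * exp (-(v * s) * cosh x) := by rw [one_mul]

theorem differentiableAt_besselIntegrand {z : ℂ} (hz : 0 < cos z.im) :
    DifferentiableAt ℂ (besselIntegrand ν v) z := by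
  have hcosh : Complex.cosh z ≠ 0 := by
    simpa only [Complex.re_add_im] using cosh_ofReal_add_mul_I_ne_zero (x := z.re) hz
  have htanh : DifferentiableAt ℂ Complex.tanh z := by
    rw [show Complex.tanh = fun z => Complex.sinh z / Complex.cosh z from
      funext Complex.tanh_eq_sinh_div_cosh]
    exact Complex.differentiable_sinh.differentiableAt.div
      Complex.differentiable_cosh.differentiableAt hcosh
  exact ((differentiableAt_id.const_mul _).cexp.mul htanh).mul
    (Complex.differentiable_cosh.differentiableAt.const_mul _).cexp

theorem integral_sin_mul_tanh_mul_exp_eq {θ : ℝ} (hR : 0 ≤ R) (hθ : 0 ≤ θ) (hθ' : θ < π / 2) :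
    ∫ t in 0..R, sin (ν * t) * tanh t * exp (-v * cosh t) =
      (∫ t in 0..R, (besselIntegrand ν v (t + θ * Complex.I)).im) -
        (∫ y in 0..θ, besselIntegrand ν v (R + y * Complex.I)).re := by
  have hcos : ∀ y ∈ Icc 0 θ, 0 < cos y := fun y hy =>
    cos_pos_of_mem_Ioo ⟨by linarith [hy.1, pi_pos], by linarith [hy.2]⟩
  rw [← integral_im_eq_of_re_eq_zero hR hθ
    (fun z hz => (differentiableAt_besselIntegrand (hcos z.im hz.2)).differentiableWithinAt)
    fun y hy => re_besselIntegrand_mul_I (hcos y hy)]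
  simp only [im_besselIntegrand_ofReal]

theorem exp_neg_mul_pi_div_two_sub_le (hνδ0 : 0 ≤ ν * δ) (hνδ : ν * δ ≤ 1 / 2) :
    exp (-(ν * (π / 2 - δ))) ≤ 2 * exp (-(π * ν / 2)) := by
  have hexp : exp (ν * δ) ≤ 2 := by
    refine (exp_bound_div_one_sub_of_interval hνδ0 (by linarith)).trans ?_
    rw [div_le_iff₀ (by linarith)]
    linarith
  calc exp (-(ν * (π / 2 - δ))) = exp (ν * δ) * exp (-(π * ν / 2)) := by
        rw [← exp_add]
        ring_nf
    _ ≤ 2 * exp (-(π * ν / 2)) := mul_le_mul_of_nonneg_right hexp (exp_pos _).le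

/-- Shifting only to within `1 / (2Lν)` of the pole of `tanh` at `πi / 2` costs a bounded factor
`e^{1 / (2L)}` and keeps the frequency `v cos δ` comparable to `ν`. -/
theorem abs_integral_im_besselIntegrand_le (hL : 1 ≤ L) (hν : 1 ≤ ν) (hνv : ν ≤ L * v)
    (hvν : v ≤ L * ν) (hδ : 2 * L * ν * δ = 1) (hR : 1 ≤ R) :
    |∫ t in 0..R, (besselIntegrand ν v (t + (π / 2 - δ : ℝ) * Complex.I)).im| ≤
      76 * L * exp (-(π * ν / 2)) := by
  have hv : 0 < v := pos_of_mul_pos_right (by linarith) (by linarith : 0 ≤ L)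
  have hδ0 : 0 < δ := pos_of_mul_pos_right (hδ ▸ one_pos) (by positivity)
  have hνδ : ν * δ ≤ 1 / 2 := by nlinarith [mul_pos (by linarith : 0 < ν) hδ0]
  have hδ1 : δ ≤ 1 / 2 := by nlinarith
  have hsin : 0 < sin δ := sin_pos_of_pos_of_lt_pi hδ0 (by linarith [pi_gt_three])
  have hcos : 1 / 2 ≤ cos δ := by nlinarith [one_sub_sq_div_two_le_cos (x := δ)]
  have hq : 0 ≤ v * sin δ := by positivity
  have hdecomp : ∀ t : ℝ, (besselIntegrand ν v (t + (π / 2 - δ : ℝ) * Complex.I)).im =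
      exp (-(ν * (π / 2 - δ))) *
        (sinWeight (v * sin δ) (sin δ) t * sin (besselPhase ν (v * cos δ) t) +
          cosWeight (v * sin δ) (sin δ) (cos δ) t * cos (besselPhase ν (v * cos δ) t)) :=
    fun t => by
      rw [im_besselIntegrand (by rwa [cos_pi_div_two_sub]), cos_pi_div_two_sub, sin_pi_div_two_sub]
  have hsinPart : |∫ t in 0..R, sinWeight (v * sin δ) (sin δ) t *
      sin (besselPhase ν (v * cos δ) t)| ≤ 36 * L := by
    refine abs_integral_sinWeight_mul_sin_besselPhase_le hq hsin hL hν ?_ ?_ ?_ hR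
    · exact (mul_le_mul_of_nonneg_left (sin_le hδ0.le) (by positivity)).trans_eq hδ
    · nlinarith [mul_pos (by linarith : 0 < L) hv]
    · exact (mul_le_of_le_one_right hv.le (cos_le_one δ)).trans hvν
  have hcosPart := abs_integral_cosWeight_mul_cos_le hq hsin (abs_cos_le_one δ)
    (by linarith : 0 ≤ R) (besselPhase ν (v * cos δ))
  simp only [hdecomp]
  rw [intervalIntegral.integral_const_mul, intervalIntegral.integral_add
    ((continuous_sinWeight_mul_sin_besselPhase hsin).intervalIntegrable 0 R)
    ((continuous_cosWeight_mul_cos_besselPhase hsin).intervalIntegrable 0 R), abs_mul,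
    abs_of_pos (exp_pos _)]
  calc _ ≤ 2 * exp (-(π * ν / 2)) * (36 * L + 2) := by
        gcongr
        · exact exp_neg_mul_pi_div_two_sub_le (by positivity) hνδ
        · exact (abs_add_le _ _).trans (add_le_add hsinPart hcosPart)
    _ ≤ 76 * L * exp (-(π * ν / 2)) := by nlinarith [exp_pos (-(π * ν / 2))]

theorem norm_integral_besselIntegrand_vertical_le (hν : 0 ≤ ν) (hv : 0 ≤ v) (hδ : 0 < δ)
    (hδ' : δ ≤ π / 2) :
    ‖∫ y in 0..(π / 2 - δ), besselIntegrand ν v (R + y * Complex.I)‖ ≤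
      (sin δ)⁻¹ * exp (-(v * sin δ) * R) * (π / 2 - δ) := by
  have hsin : 0 < sin δ := sin_pos_of_pos_of_lt_pi hδ (by linarith [pi_pos])
  have hθ : 0 ≤ π / 2 - δ := sub_nonneg.2 hδ'
  have hbound : ∀ y ∈ uIoc 0 (π / 2 - δ), ‖besselIntegrand ν v (R + y * Complex.I)‖ ≤
      (sin δ)⁻¹ * exp (-(v * sin δ) * R) := fun y hy => by
    rw [uIoc_of_le hθ] at hy
    have hcos : sin δ ≤ cos y := by
      rw [← cos_pi_div_two_sub]
      exact cos_le_cos_of_nonneg_of_le_pi hy.1.le (by linarith [pi_pos]) hy.2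
    exact (norm_besselIntegrand_le hν hv hy.1.le hsin hcos).trans <| mul_le_mul_of_nonneg_left
      (exp_neg_mul_cosh_le_exp_neg_mul (mul_nonneg hv hsin.le) R) (inv_nonneg.2 hsin.le)
  simpa only [sub_zero, abs_of_nonneg hθ] using
    intervalIntegral.norm_integral_le_of_norm_le_const hbound

theorem tendsto_integral_besselIntegrand_vertical (hν : 0 ≤ ν) (hv : 0 < v) (hδ : 0 < δ)
    (hδ' : δ ≤ π / 2) :
    Tendsto (fun R : ℝ => ∫ y in 0..(π / 2 - δ), besselIntegrand ν v (R + y * Complex.I)) atTop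
      (𝓝 0) := by
  have hsin : 0 < sin δ := sin_pos_of_pos_of_lt_pi hδ (by linarith [pi_pos])
  refine squeeze_zero_norm (fun R => norm_integral_besselIntegrand_vertical_le hν hv.le hδ hδ') ?_
  simpa only [mul_zero, zero_mul] using
    ((tendsto_exp_neg_mul_atTop (mul_pos hv hsin)).const_mul (sin δ)⁻¹).mul_const (π / 2 - δ)

end ContourShift

section BesselPrimitive

open Set MeasureTheory Filter Topology

variable {ν v L : ℝ}

theorem continuous_tanh : Continuous tanh := by
  rw [show tanh = fun t => sinh t / cosh t from funext tanh_eq_sinh_div_cosh]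
  exact continuous_sinh.div continuous_cosh fun t => (cosh_pos t).ne'

theorem tendsto_exp_neg_mul_cosh_atTop (hv : 0 < v) :
    Tendsto (fun t => exp (-v * cosh t)) atTop (𝓝 0) :=
  squeeze_zero (fun _ => (exp_pos _).le) (exp_neg_mul_cosh_le_exp_neg_mul hv.le)
    (tendsto_exp_neg_mul_atTop hv)

theorem integrableOn_exp_neg_mul_cosh (hv : 0 < v) :
    IntegrableOn (fun t => exp (-v * cosh t)) (Ioi 0) := by
  refine Integrable.mono' (exp_neg_integrableOn_Ioi 0 hv)
    (continuous_const.mul continuous_cosh).rexp.aestronglyMeasurable (.of_forall fun t => ?_)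
  rw [norm_of_nonneg (exp_pos _).le]
  exact exp_neg_mul_cosh_le_exp_neg_mul hv.le t

theorem integrableOn_sinh_mul_exp_neg_mul_cosh (hv : 0 < v) :
    IntegrableOn (fun t => sinh t * exp (-v * cosh t)) (Ioi 0) := by
  refine integrableOn_Ioi_deriv_of_nonneg' (g := fun t => -v⁻¹ * exp (-v * cosh t))
    (l := -v⁻¹ * 0) (fun t _ => ?_) (fun t ht => ?_)
    ((tendsto_exp_neg_mul_cosh_atTop hv).const_mul _)
  · refine ((((hasDerivAt_cosh t).const_mul (-v)).exp).const_mul (-v⁻¹)).congr_deriv ?_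
    field_simp
  · exact mul_nonneg (sinh_nonneg_iff.2 (le_of_lt ht)) (exp_pos _).le

/-- The integral `∫_0^∞ sin (νt) tanh t e^{-v cosh t} dt`, a primitive of `-ν K_{iν}(v) / v`. -/
noncomputable def besselPrimitive (ν v : ℝ) : ℝ :=
  ∫ t in Ioi 0, sin (ν * t) * tanh t * exp (-v * cosh t)

theorem continuous_sin_mul_tanh : Continuous fun t => sin (ν * t) * tanh t :=
  (continuous_sin.comp (continuous_const_mul ν)).mul continuous_tanh

theorem integrableOn_sin_mul_tanh_mul_exp (hv : 0 < v) :
    IntegrableOn (fun t => sin (ν * t) * tanh t * exp (-v * cosh t)) (Ioi 0) := by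
  refine (integrableOn_exp_neg_mul_cosh hv).bdd_mul (c := 1)
    continuous_sin_mul_tanh.aestronglyMeasurable (.of_forall fun t => ?_)
  rw [norm_eq_abs, abs_mul]
  exact mul_le_one₀ (abs_sin_le_one _) (abs_nonneg _) (abs_tanh_lt_one t).le

theorem integrableOn_cos_mul_exp (hv : 0 < v) :
    IntegrableOn (fun t => cos (ν * t) * exp (-v * cosh t)) (Ioi 0) :=
  (integrableOn_exp_neg_mul_cosh hv).bdd_mul (c := 1)
    (continuous_cos.comp (continuous_const_mul ν)).aestronglyMeasurable
    (.of_forall fun t => abs_cos_le_one (ν * t))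

theorem integrableOn_sin_mul_sinh_mul_exp (hv : 0 < v) :
    IntegrableOn (fun t => sin (ν * t) * (sinh t * exp (-v * cosh t))) (Ioi 0) :=
  (integrableOn_sinh_mul_exp_neg_mul_cosh hv).bdd_mul (c := 1)
    (continuous_sin.comp (continuous_const_mul ν)).aestronglyMeasurable
    (.of_forall fun t => abs_sin_le_one (ν * t))

theorem abs_besselPrimitive_le (hL : 1 ≤ L) (hν : 1 ≤ ν) (hνv : ν ≤ L * v) (hvν : v ≤ L * ν) :
    |besselPrimitive ν v| ≤ 76 * L * exp (-(π * ν / 2)) := by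
  have hv : 0 < v := pos_of_mul_pos_right (by linarith) (by linarith : 0 ≤ L)
  obtain ⟨δ, hδ0, hδ⟩ : ∃ δ, 0 < δ ∧ 2 * L * ν * δ = 1 :=
    ⟨(2 * L * ν)⁻¹, by positivity, mul_inv_cancel₀ (by positivity)⟩
  have hδ' : δ ≤ π / 2 := by nlinarith [pi_gt_three, mul_le_mul hL hν zero_le_one (by linarith)]
  have hprim := intervalIntegral_tendsto_integral_Ioi 0
    (integrableOn_sin_mul_tanh_mul_exp (ν := ν) hv) tendsto_id
  have hvert := Complex.continuous_re.continuousAt.tendsto.comp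
    (tendsto_integral_besselIntegrand_vertical (ν := ν) (by linarith) hv hδ0 hδ')
  have hsum := (hprim.add hvert).abs
  rw [Complex.zero_re, add_zero] at hsum
  refine le_of_tendsto hsum ?_
  filter_upwards [eventually_ge_atTop 1] with R hR
  rw [id, integral_sin_mul_tanh_mul_exp_eq (by linarith) (sub_nonneg.2 hδ')
    (sub_lt_self _ hδ0), Function.comp_apply, sub_add_cancel]
  exact abs_integral_im_besselIntegrand_le hL hν hνv hvν hδ hR

theorem hasDerivAt_besselPrimitive_integral (hv : 0 < v) :
    HasDerivAt (besselPrimitive ν)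
      (∫ t in Ioi 0, -(sin (ν * t) * (sinh t * exp (-v * cosh t)))) v := by
  have hmeas : ∀ w, AEStronglyMeasurable (fun t => sin (ν * t) * tanh t * exp (-w * cosh t))
      (volume.restrict (Ioi 0)) := fun w =>
    (continuous_sin_mul_tanh.mul (continuous_const.mul continuous_cosh).rexp).aestronglyMeasurable
  refine (hasDerivAt_integral_of_dominated_loc_of_deriv_le
    (F' := fun w t => -(sin (ν * t) * (sinh t * exp (-w * cosh t))))
    (Ioi_mem_nhds (half_lt_self hv)) (.of_forall hmeas) (integrableOn_sin_mul_tanh_mul_exp hv)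
    (integrableOn_sin_mul_sinh_mul_exp hv).neg.aestronglyMeasurable
    (ae_restrict_of_forall_mem measurableSet_Ioi fun t ht w hw => ?_)
    (integrableOn_sinh_mul_exp_neg_mul_cosh (half_pos hv)) (.of_forall fun t w _ => ?_)).2
  · have hsinh : 0 ≤ sinh t := sinh_nonneg_iff.2 (le_of_lt ht)
    rw [norm_neg, norm_eq_abs, abs_mul, abs_mul, abs_of_nonneg hsinh, abs_of_pos (exp_pos _)]
    calc _ ≤ 1 * (sinh t * exp (-(v / 2) * cosh t)) := by
          gcongr ?_ * (_ * ?_)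
          · exact abs_sin_le_one _
          · exact exp_neg_mul_cosh_le_exp_neg_mul_cosh (le_of_lt hw) t
      _ = _ := one_mul _
  · refine (((hasDerivAt_id' w).fun_neg.mul_const (cosh t)).exp.const_mul
      (sin (ν * t) * tanh t)).congr_deriv ?_
    have := (cosh_pos t).ne'
    rw [tanh_eq_sinh_div_cosh]
    field_simp

theorem mul_KBessel_eq (hv : 0 < v) :
    ν * KBessel ν v = v * ∫ t in Ioi 0, sin (ν * t) * (sinh t * exp (-v * cosh t)) := by
  have hderiv : ∀ t, HasDerivAt (fun t => sin (ν * t) * exp (-v * cosh t))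
      (ν * (cos (ν * t) * exp (-v * cosh t)) -
        v * (sin (ν * t) * (sinh t * exp (-v * cosh t)))) t :=
    fun t => (((hasDerivAt_id' t).const_mul ν).sin.fun_mul
      ((hasDerivAt_cosh t).const_mul (-v)).exp).congr_deriv (by ring)
  have hcos := (integrableOn_cos_mul_exp (ν := ν) hv).const_mul ν
  have hsin := (integrableOn_sin_mul_sinh_mul_exp (ν := ν) hv).const_mul v
  have htop : Tendsto (fun t => sin (ν * t) * exp (-v * cosh t)) atTop (𝓝 0) :=
    squeeze_zero_norm (fun t => by
      rw [norm_mul, norm_of_nonneg (exp_pos _).le]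
      exact mul_le_of_le_one_left (exp_pos _).le (abs_sin_le_one _))
      (tendsto_exp_neg_mul_cosh_atTop hv)
  have hparts := integral_Ioi_of_hasDerivAt_of_tendsto' (fun t _ => hderiv t) (hcos.sub hsin) htop
  rw [integral_sub hcos hsin, integral_const_mul, integral_const_mul, mul_zero, sin_zero, zero_mul,
    sub_zero, sub_eq_zero] at hparts
  simpa only [KBessel, mul_comm (exp _)] using hparts

theorem hasDerivAt_besselPrimitive (hv : 0 < v) :
    HasDerivAt (besselPrimitive ν) (-(ν * KBessel ν v / v)) v := by
  refine (hasDerivAt_besselPrimitive_integral hv).congr_deriv ?_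
  rw [integral_neg, mul_KBessel_eq hv, mul_div_cancel_left₀ _ hv.ne']

theorem continuousOn_KBessel : ContinuousOn (KBessel ν) (Ioi 0) := fun v hv => by
  refine (continuousAt_of_dominated (bound := fun t => exp (-(v / 2) * cosh t))
    (.of_forall fun w => ?_) ?_ (integrableOn_exp_neg_mul_cosh (half_pos hv))
    (.of_forall fun t => ?_)).continuousWithinAt
  · exact ((continuous_const.mul continuous_cosh).rexp.mul
      (continuous_cos.comp (continuous_const_mul ν))).aestronglyMeasurable
  · filter_upwards [Ioi_mem_nhds (half_lt_self hv)] with w hw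
    refine .of_forall fun t => ?_
    rw [norm_mul, norm_of_nonneg (exp_pos _).le]
    exact (mul_le_of_le_one_right (exp_pos _).le (abs_cos_le_one _)).trans
      (exp_neg_mul_cosh_le_exp_neg_mul_cosh (le_of_lt hw) t)
  · exact ((continuous_neg.mul continuous_const).rexp.mul continuous_const).continuousAt

end BesselPrimitive

section TestFunction

open Set MeasureTheory

variable {a b r L : ℝ} {M : ℕ} {φ : ℝ → ℝ}

theorem integral_abs_deriv_le_one (hφ : ContDiff ℝ 1 φ) (h01 : ∀ t, φ t ∈ Icc 0 1) (hab : a ≤ b)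
    (hmono : MonotoneOn φ (Icc a b) ∨ AntitoneOn φ (Icc a b)) : ∫ t in a..b, |deriv φ t| ≤ 1 := by
  rcases hmono with hmono | hanti
  · rw [integral_abs_deriv_eq_sub_of_monotoneOn hφ hab hmono]
    linarith [(h01 a).1, (h01 b).2]
  · rw [integral_abs_deriv_eq_sub_of_antitoneOn hφ hab hanti]
    linarith [(h01 b).1, (h01 a).2]

theorem PiecewiseMono.integral_abs_deriv_le (h : PiecewiseMono φ M) (hM : 0 < M)
    (hφ : ContDiff ℝ 1 φ) (h01 : ∀ t, φ t ∈ Icc 0 1) (ha : 0 ≤ a) (hab : a ≤ b) :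
    ∫ t in a..b, |deriv φ t| ≤ M := by
  obtain ⟨x, hx0, hx, hpieces, hray⟩ := h
  obtain ⟨N, rfl⟩ := Nat.exists_eq_add_one.2 hM
  have hint := (hφ.continuous_deriv le_rfl).abs.intervalIntegrable (μ := volume)
  have hbounded : ∫ t in 0..x N, |deriv φ t| ≤ N := by
    rw [← hx0, ← intervalIntegral.sum_integral_adjacent_intervals fun i _ => hint (x i) (x (i + 1))]
    refine (Finset.sum_le_card_nsmul _ _ 1 fun i hi => ?_).trans_eq (by simp)
    exact integral_abs_deriv_le_one hφ h01 (hx i.le_succ)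
      (hpieces i (Nat.add_lt_add_right (Finset.mem_range.1 hi) 1))
  have hunbounded : ∫ t in x N..max b (x N), |deriv φ t| ≤ 1 :=
    integral_abs_deriv_le_one hφ h01 (le_max_right _ _) <|
      hray.imp (·.mono Icc_subset_Ici_self) (·.mono Icc_subset_Ici_self)
  calc ∫ t in a..b, |deriv φ t| ≤ ∫ t in 0..max b (x N), |deriv φ t| :=
        intervalIntegral.integral_mono_interval ha hab (le_max_left _ _)
          (.of_forall fun t => abs_nonneg _) (hint _ _)
    _ = (∫ t in 0..x N, |deriv φ t|) + ∫ t in x N..max b (x N), |deriv φ t| :=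
        (intervalIntegral.integral_add_adjacent_intervals (hint _ _) (hint _ _)).symm
    _ ≤ (N + 1 : ℕ) := by
        push_cast
        exact add_le_add hbounded hunbounded

theorem integral_KBessel_eq_of_support_subset {ν : ℝ} (hφ : ContDiff ℝ 1 φ) (ha : 0 < a)
    (hab : a ≤ b) (hsupp : Function.support φ ⊆ Ioo a b) :
    ν * ∫ u in Ioi 0, KBessel ν u * φ u / u = ∫ u in a..b, deriv φ u * besselPrimitive ν u := by
  have hpos : ∀ u ∈ uIcc a b, 0 < u := fun u hu =>
    ha.trans_le (uIcc_of_le hab ▸ hu : u ∈ Icc a b).1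
  have hKBessel : ContinuousOn (fun u => -(ν * KBessel ν u / u)) (uIcc a b) :=
    ((continuousOn_const.mul (continuousOn_KBessel.mono hpos)).div continuousOn_id
      fun u hu => (hpos u hu).ne').neg
  have hparts := intervalIntegral.integral_mul_deriv_eq_deriv_mul
    (fun u _ => (hφ.differentiable one_ne_zero u).hasDerivAt)
    (fun u hu => hasDerivAt_besselPrimitive (ν := ν) (hpos u hu))
    ((hφ.continuous_deriv le_rfl).intervalIntegrable a b) hKBessel.intervalIntegrable
  have hvanish : ∀ u ∉ Ioo a b, φ u = 0 := fun u hu => Function.notMem_support.1 (mt (@hsupp u) hu)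
  rw [hvanish a left_notMem_Ioo, hvanish b right_notMem_Ioo, zero_mul, zero_mul, sub_zero,
    zero_sub] at hparts
  rw [setIntegral_eq_of_subset_of_forall_sdiff_eq_zero measurableSet_Ioi (s := Ioc a b)
    (fun u hu => ha.trans hu.1) (fun u hu => ?_), ← intervalIntegral.integral_of_le hab,
    ← neg_eq_iff_eq_neg.2 hparts, ← intervalIntegral.integral_const_mul,
    ← intervalIntegral.integral_neg]
  · congr 1 with u
    ring
  · rw [hvanish u fun h => hu.2 (Ioo_subset_Ioc_self h), mul_zero, zero_div]

theorem abs_phiCheck_le (hL : 1 ≤ L) (hr : 1 ≤ 2 * r) (hφ : ContDiff ℝ 1 φ)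
    (hsupp : Function.support φ ⊆ Ioo (2 * r / L) (2 * r * L)) :
    |phiCheck φ r| ≤ 38 * L * r⁻¹ * ∫ u in (2 * r / L)..(2 * r * L), |deriv φ u| := by
  have hr0 : 0 < r := by linarith
  have hle : 2 * r / L ≤ 2 * r * L :=
    (div_le_self (by positivity) hL).trans (le_mul_of_one_le_right (by positivity) hL)
  have hcosh : cosh (π * r) ≤ exp (π * r) := by
    rw [cosh_eq]
    linarith [exp_le_exp.2 (neg_le_self (mul_pos pi_pos hr0).le)]
  have hprim : |∫ u in (2 * r / L)..(2 * r * L), deriv φ u * besselPrimitive (2 * r) u| ≤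
      ∫ u in (2 * r / L)..(2 * r * L), |deriv φ u| * (76 * L * exp (-(π * r))) := by
    have hint := (hφ.continuous_deriv le_rfl).abs.intervalIntegrable (μ := volume)
      (2 * r / L) (2 * r * L)
    rw [← norm_eq_abs]
    refine intervalIntegral.norm_integral_le_of_norm_le hle (.of_forall fun u hu => ?_)
      (hint.mul_const _)
    have hlower := (div_le_iff₀' (by linarith)).1 hu.1.le
    have h := abs_besselPrimitive_le hL hr hlower (hu.2.trans_eq (mul_comm _ _))
    rw [show π * (2 * r) / 2 = π * r by ring] at h
    rw [norm_eq_abs, abs_mul]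
    exact mul_le_mul_of_nonneg_left h (abs_nonneg _)
  rw [intervalIntegral.integral_mul_const,
    ← integral_KBessel_eq_of_support_subset hφ (by positivity) hle hsupp, abs_mul,
    abs_of_pos (by positivity : 0 < 2 * r), ← le_div_iff₀' (by positivity)] at hprim
  rw [phiCheck, abs_mul, abs_of_pos (cosh_pos _)]
  calc _ ≤ exp (π * r) * _ := mul_le_mul hcosh hprim (abs_nonneg _) (exp_pos _).le
    _ = (exp (π * r) * exp (-(π * r))) *
        (38 * L * r⁻¹ * ∫ u in (2 * r / L)..(2 * r * L), |deriv φ u|) := by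
      field_simp
      ring
    _ = _ := by rw [← exp_add, add_neg_cancel, exp_zero, one_mul]

theorem IsAdmissible.support_subset {x T C₀ : ℝ} (h : IsAdmissible a x T C₀ M φ) (hx : 0 < x)
    (hT : 0 < T) (hTx : T ≤ x / 3) (hr : 0 < r) (har : a / (8 * x) ≤ r) (hra : r ≤ a / x) :
    Function.support φ ⊆ Ioo (2 * r / 6) (2 * r * 6) := by
  obtain ⟨-, -, -, hlower, hupper, -⟩ := h
  rw [div_le_iff₀ (by positivity)] at har
  rw [le_div_iff₀ hx] at hra
  have hra' : 2 * r / 6 ≤ a / (2 * x + 2 * T) := by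
    rw [le_div_iff₀ (by positivity)]
    nlinarith
  have har' : a / (x - T) ≤ 2 * r * 6 := by
    rw [div_le_iff₀ (by linarith)]
    nlinarith
  exact fun u hu => ⟨hra'.trans_lt (not_le.1 (mt (hlower u) hu)),
    (not_le.1 (mt (hupper u) hu)).trans_le har'⟩

end TestFunction

theorem statement14_general {r L : ℝ} {M : ℕ} {φ : ℝ → ℝ} (hM : 0 < M) (hL : 1 ≤ L)
    (hr : 1 ≤ 2 * r) (hφ : ContDiff ℝ 1 φ) (h01 : ∀ t, φ t ∈ Set.Icc 0 1)
    (hmono : PiecewiseMono φ M)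
    (hsupp : Function.support φ ⊆ Set.Ioo (2 * r / L) (2 * r * L)) :
    |phiCheck φ r| ≤ 38 * L * M * r⁻¹ := by
  have hr0 : 0 < r := by linarith
  have hle : 2 * r / L ≤ 2 * r * L :=
    (div_le_self (by positivity) hL).trans (le_mul_of_one_le_right (by positivity) hL)
  calc |phiCheck φ r| ≤ 38 * L * r⁻¹ * _ := abs_phiCheck_le hL hr hφ hsupp
    _ ≤ 38 * L * r⁻¹ * M := by
      gcongr
      exact hmono.integral_abs_deriv_le hM hφ h01 (by positivity) hle
    _ = 38 * L * M * r⁻¹ := by ring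

theorem statement14 :
    ∀ C₀ : ℝ, 0 < C₀ → ∀ M : ℕ, 0 < M →
      ∃ C : ℝ, 0 < C ∧
        ∀ a x T : ℝ, 0 < a → 0 < x → 0 < T → T ≤ x / 3 →
          ∀ φ : ℝ → ℝ, IsAdmissible a x T C₀ M φ →
            ∀ r : ℝ, max (a / (8 * x)) 1 ≤ r → r ≤ a / x →
              |phiCheck φ r| ≤ C * r⁻¹ := by
  intro C₀ _ M hM
  refine ⟨38 * 6 * M, by positivity, fun a x T _ hx hT hTx φ hφ r hr hra => ?_⟩
  obtain ⟨har, hr1⟩ := max_le_iff.1 hr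
  exact statement14_general hM (by norm_num) (by linarith) (hφ.1.of_le (mod_cast le_top)) hφ.2.1
    hφ.2.2.2.2.2.2.1 (hφ.support_subset hx hT hTx (by linarith) har hra)
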